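/- Let Ṽ ∈ O(m,r), Y ∈ ℝ^{n×m}, X ∈ ℝ^{n×p}, and let ρ(T;λ) = Σ_{j=1}^p φ(‖T_{j*}‖_2; λ) with φ(·;λ) nondecreasing in its first argument. If B̃ minimizes B ↦ ‖YṼ − XB‖_F²/2 + ρ(B;λ) over B ∈ ℝ^{p×r}, then Â = B̃Ṽ' minimizes T ↦ ‖YṼṼ' − XT‖_F²/2 + ρ(T;λ) over T ∈ ℝ^{p×m}. -/

import Mathlib

open MeasureTheory ProbabilityTheory Matrix Set
open scoped ENNReal NNReal

noncomputable section

/-- Euclidean (ℓ₂) norm of a finitely indexed real vector. -/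
def l2norm {I : Type*} [Fintype I] (v : I → ℝ) : ℝ := Real.sqrt (∑ i, v i ^ 2)

/-- Frobenius norm of a real matrix. -/
def frobNorm {I J : Type*} [Fintype I] [Fintype J] (M : Matrix I J ℝ) : ℝ :=
  Real.sqrt (∑ i, ∑ j, M i j ^ 2)

/-- ℓ₂/ℓ₁ norm: the sum of the ℓ₂ norms of the rows. -/
def norm21 {I J : Type*} [Fintype I] [Fintype J] (M : Matrix I J ℝ) : ℝ :=
  ∑ i, l2norm (M i)

open Classical in
/-- Row support: indices of nonzero rows. -/
def rowSupport {I J : Type*} [Fintype I] [Fintype J] (M : Matrix I J ℝ) : Finset I :=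
  Finset.univ.filter (fun i => M i ≠ 0)

/-- The j-th largest singular value (j ≥ 1), via the Courant–Fischer max–min
characterization: `σ_j(M) = max_{dim V = j} min_{v ∈ V, ‖v‖=1} ‖Mv‖`. -/
def singularValue {I J : Type*} [Fintype I] [Fintype J] (M : Matrix I J ℝ) (j : ℕ) : ℝ :=
  sSup { t | ∃ V : Submodule ℝ (J → ℝ), Module.finrank ℝ V = j ∧
    t = sInf { u | ∃ v ∈ V, l2norm v = 1 ∧ u = l2norm (M.mulVec v) } }

/-- Operator norm (largest singular value). -/
def opNorm {I J : Type*} [Fintype I] [Fintype J] (M : Matrix I J ℝ) : ℝ :=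
  sSup { t | ∃ v : J → ℝ, l2norm v = 1 ∧ t = l2norm (M.mulVec v) }

/-- Schatten-q norm. -/
def schattenNorm {I J : Type*} [Fintype I] [Fintype J] (M : Matrix I J ℝ) (q : ℝ) : ℝ :=
  (∑ i ∈ Finset.Icc 1 (min (Fintype.card I) (Fintype.card J)), singularValue M i ^ q) ^ (1 / q)

/-- Squared lower k-sparse Riesz constant `κ₋²(k)`:
the minimum over column subsets B with |B| = k of the smallest eigenvalue of X_B' X_B. -/
def kappaMinusSq {n p : ℕ} (X : Matrix (Fin n) (Fin p) ℝ) (k : ℕ) : ℝ :=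
  sInf { t | ∃ B : Finset (Fin p), B.card = k ∧ ∃ v : Fin p → ℝ,
    (∀ i, i ∉ B → v i = 0) ∧ l2norm v = 1 ∧ t = l2norm (X.mulVec v) ^ 2 }

/-- Squared upper k-sparse Riesz constant `κ₊²(k)`. -/
def kappaPlusSq {n p : ℕ} (X : Matrix (Fin n) (Fin p) ℝ) (k : ℕ) : ℝ :=
  sSup { t | ∃ B : Finset (Fin p), B.card = k ∧ ∃ v : Fin p → ℝ,
    (∀ i, i ∉ B → v i = 0) ∧ l2norm v = 1 ∧ t = l2norm (X.mulVec v) ^ 2 }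

def kappaMinus {n p : ℕ} (X : Matrix (Fin n) (Fin p) ℝ) (k : ℕ) : ℝ :=
  Real.sqrt (kappaMinusSq X k)

def kappaPlus {n p : ℕ} (X : Matrix (Fin n) (Fin p) ℝ) (k : ℕ) : ℝ :=
  Real.sqrt (kappaPlusSq X k)

/-- Membership in the parameter space Θ(s, r, d, γ): rank r, all nonzero singular values in
(d, γd], and at most s nonzero rows. (Singular values are automatically nonincreasing.) -/
def memTheta {p m : ℕ} (A : Matrix (Fin p) (Fin m) ℝ) (s r : ℕ) (d γ : ℝ) : Prop :=
  A.rank = r ∧ 0 < d ∧ singularValue A 1 ≤ γ * d ∧ d < singularValue A r ∧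
    (rowSupport A).card ≤ s

/-- `V` is a matrix of top-r right singular vectors of `M`: the columns of `V` are orthonormal
eigenvectors of `MᵀM`, the j-th column with eigenvalue `σ_j(M)²`. -/
def IsRightSingularVectors {I J : Type*} [Fintype I] [Fintype J] {r : ℕ}
    (M : Matrix I J ℝ) (V : Matrix J (Fin r) ℝ) : Prop :=
  Vᵀ * V = 1 ∧ ∀ j : Fin r,
    (Mᵀ * M).mulVec (fun i => V i j) = (singularValue M (j.1 + 1)) ^ 2 • (fun i => V i j)

/-- `U` is a matrix of top-r left singular vectors of `M`. -/
def IsLeftSingularVectors {I J : Type*} [Fintype I] [Fintype J] {r : ℕ}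
    (M : Matrix I J ℝ) (U : Matrix I (Fin r) ℝ) : Prop :=
  IsRightSingularVectors Mᵀ U

instance matrixMeasurableSpace {n m : ℕ} : MeasurableSpace (Matrix (Fin n) (Fin m) ℝ) :=
  (inferInstance : MeasurableSpace (Fin n → Fin m → ℝ))

/-- Law of an n×m random matrix with i.i.d. N(0, v) entries. -/
def gaussianMatrix (n m : ℕ) (v : ℝ≥0) : Measure (Matrix (Fin n) (Fin m) ℝ) :=
  Measure.pi fun _ : Fin n => Measure.pi fun _ : Fin m => gaussianReal 0 v

open Classical in
/-- Kullback–Leibler divergence D(P‖Q). -/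
def klDivM {Ω : Type*} [MeasurableSpace Ω] (P Q : Measure Ω) : ℝ≥0∞ :=
  if P ≪ Q ∧ Integrable (fun x => Real.log (P.rnDeriv Q x).toReal) P
  then ENNReal.ofReal (∫ x, Real.log (P.rnDeriv Q x).toReal ∂P)
  else ∞

/-- ε-packing number of T with respect to the distance ρ: the maximal cardinality of a subset
of T whose pairwise ρ-distances are all at least ε. -/
def packingNumber {α : Type*} (T : Set α) (ρ : α → α → ℝ) (ε : ℝ) : ℕ :=
  sSup { k | ∃ S : Finset α, ↑S ⊆ T ∧ (∀ x ∈ S, ∀ y ∈ S, x ≠ y → ε ≤ ρ x y) ∧ S.card = k }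

/-- Moore–Penrose pseudoinverse (characterized by the four Penrose equations). -/
def IsMoorePenrose {k : ℕ} (M Mi : Matrix (Fin k) (Fin k) ℝ) : Prop :=
  M * Mi * M = M ∧ Mi * M * Mi = Mi ∧ (M * Mi)ᵀ = M * Mi ∧ (Mi * M)ᵀ = Mi * M

/-!
When `V` has orthonormal columns, right multiplication by `Vᵀ` preserves the Euclidean norm of
every row and right multiplication by `V` does not increase it. Hence `B ↦ B * Vᵀ` preserves the
penalized loss when the response is moved along with `B`, while `T ↦ T * V` takes every competitor
of the large problem to one of the small problem that is at least as good.
-/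

section Orthonormal

variable {R m r : Type*} [CommRing R] [Fintype m] [Fintype r] [DecidableEq r] {V : Matrix m r R}

theorem dotProduct_vecMul_transpose_of_orthonormal (hV : Vᵀ * V = 1) (u w : r → R) :
    (u ᵥ* Vᵀ) ⬝ᵥ (w ᵥ* Vᵀ) = u ⬝ᵥ w := by
  rw [vecMul_transpose V w, dotProduct_mulVec, vecMul_vecMul, hV, vecMul_one]

theorem dotProduct_self_eq_vecMul_add_residual (hV : Vᵀ * V = 1) (t : m → R) :
    t ⬝ᵥ t = (t ᵥ* V) ⬝ᵥ (t ᵥ* V) + (t - t ᵥ* V ᵥ* Vᵀ) ⬝ᵥ (t - t ᵥ* V ᵥ* Vᵀ) := by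
  have inner_proj : t ⬝ᵥ (t ᵥ* V ᵥ* Vᵀ) = (t ᵥ* V) ⬝ᵥ (t ᵥ* V) := by
    rw [vecMul_transpose, dotProduct_mulVec]
  have proj_proj : (t ᵥ* V ᵥ* Vᵀ) ⬝ᵥ (t ᵥ* V ᵥ* Vᵀ) = (t ᵥ* V) ⬝ᵥ (t ᵥ* V) :=
    dotProduct_vecMul_transpose_of_orthonormal hV _ _
  rw [sub_dotProduct, dotProduct_sub, dotProduct_sub, dotProduct_comm (t ᵥ* V ᵥ* Vᵀ) t,
    inner_proj, proj_proj]
  ring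

end Orthonormal

section Norms

variable {I J : Type*} [Fintype I] [Fintype J]

theorem l2norm_eq_sqrt_dotProduct (v : I → ℝ) : l2norm v = √(v ⬝ᵥ v) := by
  simp only [l2norm, dotProduct, sq]

theorem l2norm_nonneg (v : I → ℝ) : 0 ≤ l2norm v :=
  Real.sqrt_nonneg _

theorem frobNorm_nonneg (M : Matrix I J ℝ) : 0 ≤ frobNorm M :=
  Real.sqrt_nonneg _

theorem frobNorm_eq_sqrt_sum_l2norm_sq (M : Matrix I J ℝ) :
    frobNorm M = √(∑ i, l2norm (M i) ^ 2) := by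
  have row_nonneg (i : I) : 0 ≤ ∑ j, M i j ^ 2 := Finset.sum_nonneg fun j _ => sq_nonneg (M i j)
  simp only [frobNorm, l2norm, Real.sq_sqrt (row_nonneg _)]

end Norms

section PenalizedLoss

variable {n m p r : Type*} [Fintype m] [Fintype r] [DecidableEq r] {V : Matrix m r ℝ}

theorem l2norm_mul_transpose_row (hV : Vᵀ * V = 1) (B : Matrix p r ℝ) (j : p) :
    l2norm ((B * Vᵀ) j) = l2norm (B j) := by
  rw [mul_apply_eq_vecMul, l2norm_eq_sqrt_dotProduct,
    dotProduct_vecMul_transpose_of_orthonormal hV, ← l2norm_eq_sqrt_dotProduct]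

theorem l2norm_mul_row_le (hV : Vᵀ * V = 1) (T : Matrix p m ℝ) (j : p) :
    l2norm ((T * V) j) ≤ l2norm (T j) := by
  rw [mul_apply_eq_vecMul, l2norm_eq_sqrt_dotProduct, l2norm_eq_sqrt_dotProduct,
    dotProduct_self_eq_vecMul_add_residual hV (T j)]
  exact Real.sqrt_le_sqrt <| le_add_of_nonneg_right <|
    Finset.sum_nonneg fun _ _ => mul_self_nonneg _

variable [Fintype n]

theorem frobNorm_mul_transpose (hV : Vᵀ * V = 1) (M : Matrix n r ℝ) :
    frobNorm (M * Vᵀ) = frobNorm M := by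
  simp only [frobNorm_eq_sqrt_sum_l2norm_sq, l2norm_mul_transpose_row hV]

theorem frobNorm_mul_le (hV : Vᵀ * V = 1) (M : Matrix n m ℝ) : frobNorm (M * V) ≤ frobNorm M := by
  simp only [frobNorm_eq_sqrt_sum_l2norm_sq]
  gcongr with i
  · exact l2norm_nonneg _
  · exact l2norm_mul_row_le hV M i

variable [Fintype p]

/-- The row-penalized least-squares objective `‖Z - X B‖_F² / 2 + ρ(B; λ)` of a multivariate
regression with response `Z` and design `X`, where `ρ(B; λ) = ∑ j, φ(‖B_{j*}‖₂; λ)`. The tuning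
parameter `λ` is absorbed into `φ`. -/
def rowPenalizedLoss {k : Type*} [Fintype k] (Z : Matrix n k ℝ) (X : Matrix n p ℝ) (φ : ℝ → ℝ)
    (B : Matrix p k ℝ) : ℝ :=
  frobNorm (Z - X * B) ^ 2 / 2 + ∑ j, φ (l2norm (B j))

theorem rowPenalizedLoss_mul_transpose (hV : Vᵀ * V = 1) (Z : Matrix n r ℝ) (X : Matrix n p ℝ)
    (φ : ℝ → ℝ) (B : Matrix p r ℝ) :
    rowPenalizedLoss (Z * Vᵀ) X φ (B * Vᵀ) = rowPenalizedLoss Z X φ B := by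
  simp only [rowPenalizedLoss, ← Matrix.mul_assoc, ← Matrix.sub_mul,
    frobNorm_mul_transpose hV, l2norm_mul_transpose_row hV]

theorem rowPenalizedLoss_mul_le (hV : Vᵀ * V = 1) (Z : Matrix n m ℝ) (X : Matrix n p ℝ)
    {φ : ℝ → ℝ} (hφ : MonotoneOn φ (Ici 0)) (T : Matrix p m ℝ) :
    rowPenalizedLoss (Z * V) X φ (T * V) ≤ rowPenalizedLoss Z X φ T := by
  simp only [rowPenalizedLoss, ← Matrix.mul_assoc, ← Matrix.sub_mul]
  gcongr with j
  · exact frobNorm_nonneg _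
  · exact frobNorm_mul_le hV _
  · exact hφ (l2norm_nonneg _) (l2norm_nonneg _) (l2norm_mul_row_le hV T j)

theorem stmt1_general (hV : Vᵀ * V = 1) (Z : Matrix n r ℝ) (X : Matrix n p ℝ) {φ : ℝ → ℝ}
    (hφ : MonotoneOn φ (Ici 0)) {B : Matrix p r ℝ}
    (hB : ∀ B', rowPenalizedLoss Z X φ B ≤ rowPenalizedLoss Z X φ B') (T : Matrix p m ℝ) :
    rowPenalizedLoss (Z * Vᵀ) X φ (B * Vᵀ) ≤ rowPenalizedLoss (Z * Vᵀ) X φ T :=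
  calc
    rowPenalizedLoss (Z * Vᵀ) X φ (B * Vᵀ)
      = rowPenalizedLoss Z X φ B := rowPenalizedLoss_mul_transpose hV Z X φ B
    _ ≤ rowPenalizedLoss Z X φ (T * V) := hB (T * V)
    _ = rowPenalizedLoss (Z * Vᵀ * V) X φ (T * V) := by
      rw [Matrix.mul_assoc, hV, Matrix.mul_one]
    _ ≤ rowPenalizedLoss (Z * Vᵀ) X φ T := rowPenalizedLoss_mul_le hV (Z * Vᵀ) X hφ T

end PenalizedLoss

/-- If `B̃` minimizes `B ↦ ‖YṼ − XB‖_F²/2 + ρ(B;λ)` over p×r matrices, where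
`ρ(B;λ) = Σ_j φ(‖B_{j*}‖₂)` with `φ` nondecreasing, then `Â = B̃Ṽ'` minimizes
`T ↦ ‖YṼṼ' − XT‖_F²/2 + ρ(T;λ)` over p×m matrices. -/
theorem stmt1 {n m p r : ℕ} (Y : Matrix (Fin n) (Fin m) ℝ) (X : Matrix (Fin n) (Fin p) ℝ)
    (Vt : Matrix (Fin m) (Fin r) ℝ) (hVt : Vtᵀ * Vt = 1)
    (φ : ℝ → ℝ) (hφ : Monotone φ)
    (Bt : Matrix (Fin p) (Fin r) ℝ)
    (hmin : ∀ B : Matrix (Fin p) (Fin r) ℝ,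
      frobNorm (Y * Vt - X * Bt) ^ 2 / 2 + ∑ j, φ (l2norm (Bt j)) ≤
        frobNorm (Y * Vt - X * B) ^ 2 / 2 + ∑ j, φ (l2norm (B j))) :
    ∀ T : Matrix (Fin p) (Fin m) ℝ,
      frobNorm (Y * Vt * Vtᵀ - X * (Bt * Vtᵀ)) ^ 2 / 2 + ∑ j, φ (l2norm ((Bt * Vtᵀ) j)) ≤
        frobNorm (Y * Vt * Vtᵀ - X * T) ^ 2 / 2 + ∑ j, φ (l2norm (T j)) :=
  stmt1_general hVt (Y * Vt) X (hφ.monotoneOn _) hmin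

end
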